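/- There exists an irrational number α ∈ [0,1] such that Shulga's algorithm applied to α takes infinitely many steps and its Shulga sequences satisfy 4n − 2 ≤ b_n, b_n < c_n, and c_n < 5n for all n ≥ 1. -/

import Mathlib

/-!
The number is `α = β + γ` with `β = [0; b₁, b₂, …]` and `γ = [0; c₁, c₂, …]`, for explicitly chosen
digits. Let `qₙ`, `sₙ` be the denominators of the `n`-th convergents of `β` and `γ`.

The algorithm applied to `α` returns these digits as soon as, for every `n`, the number
`α - [0; c₁, …, cₙ]` lies strictly between `[0; b₁, …, bₙ, bₙ₊₁ - 1]` and `[0; b₁, …, bₙ₊₁]`, and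
`α - [0; b₁, …, bₙ₊₁]` lies strictly between `[0; c₁, …, cₙ₊₁]` and `[0; c₁, …, cₙ, cₙ₊₁ + 1]`
(`pq_eq_of_between`). The positions of these numbers relative to the endpoints are controlled by the
usual bounds on `β` and `γ` minus their convergents, so both conditions follow from polynomial
inequalities between consecutive denominators, collected in `Admissible`. To first order they say
that `(sₙ / qₙ)²` lies between `bₙ₊₁ - 2 - d` and `bₙ₊₁ - 2`, where `d = cₙ₊₁ - bₙ₊₁`.

Admissible digits with `4n - 2 ≤ bₙ < cₙ < 5n` are built recursively (`choose`): `bₙ₊₁` is the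
integer part of `(sₙ / qₙ)² + 17/5`, and `d` is `3` or `2` according to whether `(sₙ / qₙ)²` is below
or above `9n/2`. Passing from `n` to `n + 1` increases `(sₙ / qₙ)²` by about `2d`, that is by `6` or
`4`, and this feedback keeps it in `[4n - 7/5, 5n - 7/5)` once `n ≥ 14` (`step_estimates`,
`choose_step`), which gives the required size of the digits. The steps with `n < 14` are finite
computations.

Irrationality (`Admissible.irrational`): if `α` had denominator `v`, comparing `α` with the sum of
the `n`-th convergents would force `bₙ₊₁ ≤ 2 v sₙ / qₙ`, which contradicts `(sₙ / qₙ)² < bₙ₊₁ + 1`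
for large `n`.
-/

noncomputable section

namespace ShulgaPaper

open Filter Topology

/-- The value of the finite continued fraction `[0; a₁, …, aₙ]`
(the empty continued fraction has value `0`). -/
def cf : List ℕ → ℝ
  | [] => 0
  | a :: l => 1 / ((a : ℝ) + cf l)

/-- Iterates of the Gauss map, starting from the fractional part of `x`. -/
def gaussIter (x : ℝ) : ℕ → ℝ
  | 0 => Int.fract x
  | n + 1 => Int.fract (1 / gaussIter x n)

/-- The `n`-th partial quotient `aₙ(x)` of the continued fraction expansion of `x`
(for `n ≥ 1`; a junk value is returned if it is undefined). -/
def pq (x : ℝ) (n : ℕ) : ℕ := ⌊1 / gaussIter x (n - 1)⌋₊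

/-- The `n`-th partial quotient `aₙ(x)` of `x` is defined (`n ≥ 1`), i.e. `n` does not
exceed the length of the continued fraction expansion of `x`. -/
def pqDefined (x : ℝ) (n : ℕ) : Prop := gaussIter x (n - 1) ≠ 0

/-- The set `G` of real numbers that are rational or whose partial quotients diverge. -/
def G : Set ℝ :=
  {x | (∃ q : ℚ, x = (q : ℝ)) ∨ Tendsto (fun n => pq x n) atTop atTop}

/-- The list of pairs `(b_k, c_k)`, `k = 1, …, n`, produced by (a totalized version of)
Shulga's algorithm applied to `α`. -/
def shulgaList (α : ℝ) : ℕ → List (ℕ × ℕ)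
  | 0 => []
  | n + 1 =>
      let L := shulgaList α n
      let b := pq (α - cf (L.map Prod.snd)) (n + 1) + 1
      let c := pq (α - cf (L.map Prod.fst ++ [b])) (n + 1)
      L ++ [(b, c)]

/-- The list `[b₁, …, bₙ]` of Shulga's algorithm applied to `α`. -/
def bList (α : ℝ) (n : ℕ) : List ℕ := (shulgaList α n).map Prod.fst

/-- The list `[c₁, …, cₙ]` of Shulga's algorithm applied to `α`. -/
def cList (α : ℝ) (n : ℕ) : List ℕ := (shulgaList α n).map Prod.snd

/-- `bₙ` of Shulga's algorithm applied to `α` (for `n ≥ 1`). -/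
def shulgaB (α : ℝ) (n : ℕ) : ℕ := ((shulgaList α n).getLast?.getD (0, 0)).1

/-- `cₙ` of Shulga's algorithm applied to `α` (for `n ≥ 1`). -/
def shulgaC (α : ℝ) (n : ℕ) : ℕ := ((shulgaList α n).getLast?.getD (0, 0)).2

/-- The first `n` steps of Shulga's algorithm applied to `α` are defined: for each step
`k + 1 ≤ n`, the partial quotients `a_{k+1}(α - [0;c₁,…,c_k])` and
`a_{k+1}(α - [0;b₁,…,b_{k+1}])` defining `b_{k+1}` and `c_{k+1}` exist
(in particular the algorithm has not stopped before step `n`). -/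
def shulgaDefined (α : ℝ) (n : ℕ) : Prop :=
  ∀ k < n, pqDefined (α - cf (cList α k)) (k + 1) ∧
    pqDefined (α - cf (bList α (k + 1))) (k + 1)

/-- The half-open interval whose included endpoint is `x` and excluded endpoint is `y`,
the smaller one being the left endpoint. -/
def hIco (x y : ℝ) : Set ℝ := if x ≤ y then Set.Ico x y else Set.Ioc y x

/-- The list `[a 1, …, a n]`. -/
def listOf (a : ℕ → ℕ) (n : ℕ) : List ℕ := (List.range n).map fun i => a (i + 1)

/-- The interval `B_k` determined by the digits `b`, `c` (`k ≥ 1`). -/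
def Bset (b c : ℕ → ℕ) (k : ℕ) : Set ℝ :=
  hIco (cf (listOf b (k - 1) ++ [b k - 1]) + cf (listOf c (k - 1)))
    (cf (listOf b k) + cf (listOf c (k - 1)))

/-- The interval `C_k` determined by the digits `b`, `c` (`k ≥ 1`). -/
def Cset (b c : ℕ → ℕ) (k : ℕ) : Set ℝ :=
  hIco (cf (listOf c k) + cf (listOf b k))
    (cf (listOf c (k - 1) ++ [c k + 1]) + cf (listOf b k))

/-- `A₀ = [0,1]` and `Aₙ = ⋂_{k=1}^{n} (B_k ∩ C_k)` for `n ≥ 1`. -/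
def Aset (b c : ℕ → ℕ) : ℕ → Set ℝ
  | 0 => Set.Icc 0 1
  | n + 1 => ⋂ k ∈ Finset.Icc 1 (n + 1), (Bset b c k ∩ Cset b c k)

/-- The denominators of the convergents of `[0; a 1, a 2, …]`:
`q₀ = 1`, `q₁ = a 1`, `q_k = a k * q_{k-1} + q_{k-2}`. -/
def qden (a : ℕ → ℕ) : ℕ → ℕ
  | 0 => 1
  | 1 => a 1
  | n + 2 => a (n + 2) * qden a (n + 1) + qden a n

/-! ### Partial quotients of numbers between two finite continued fractions -/

/-- `[0; l₁, …, lₖ + t]`: the value of the finite continued fraction with digits `l` in which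
the tail `t` takes the place of everything after the last digit. -/
def cfT : List ℕ → ℝ → ℝ
  | [], t => t
  | a :: l, t => 1 / ((a : ℝ) + cfT l t)

/-- The list `[a 0, …, a (n-1)]`; digits are indexed from `0` here. -/
def digs (a : ℕ → ℕ) (n : ℕ) : List ℕ := (List.range n).map a

/-- The continuant recursion `K (n+2) = a n * K (n+1) + K n` with initial values `u`, `v`. -/
def cont (a : ℕ → ℕ) (u v : ℕ) : ℕ → ℕ
  | 0 => u
  | 1 => v
  | n + 2 => a n * cont a u v (n + 1) + cont a u v n

/-- Numerators of convergents, shifted by one: `P a (n+1) / Q a (n+1) = [0; a 0, …, a (n-1)]`. -/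
abbrev P (a : ℕ → ℕ) : ℕ → ℕ := cont a 1 0

/-- Denominators of convergents, shifted by one: `Q a 0 = 0`, `Q a 1 = 1`, `Q a 2 = a 0`. -/
abbrev Q (a : ℕ → ℕ) : ℕ → ℕ := cont a 0 1

lemma cont_succ (a : ℕ → ℕ) (u v n : ℕ) :
    cont a u v (n + 2) = a n * cont a u v (n + 1) + cont a u v n := rfl

lemma cfT_zero (l : List ℕ) : cfT l 0 = cf l := by
  induction l with
  | nil => rfl
  | cons a l ih => simp [cfT, cf, ih]

lemma cfT_append (l : List ℕ) (a : ℕ) (t : ℝ) : cfT (l ++ [a]) t = cfT l (1 / (a + t)) := by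
  induction l with
  | nil => rfl
  | cons b l ih => simp [cfT, ih]

lemma cf_append (l : List ℕ) (a : ℕ) : cf (l ++ [a]) = cfT l (1 / a) := by
  rw [← cfT_zero, cfT_append, add_zero]

lemma digs_succ (a : ℕ → ℕ) (n : ℕ) : digs a (n + 1) = digs a n ++ [a n] := by
  simp [digs, List.range_succ]

lemma cfT_nonneg (l : List ℕ) {t : ℝ} (ht : 0 ≤ t) : 0 ≤ cfT l t := by
  induction l with
  | nil => exact ht
  | cons a l ih => simp only [cfT]; positivity

lemma cfT_mem_Ioo (l : List ℕ) (hl : ∀ a ∈ l, 1 ≤ a) {t : ℝ} (ht : t ∈ Set.Ioo (0 : ℝ) 1) :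
    cfT l t ∈ Set.Ioo (0 : ℝ) 1 := by
  induction l with
  | nil => exact ht
  | cons a l ih =>
    have h := ih fun x hx => hl x (by simp [hx])
    have ha : (1 : ℝ) ≤ a := by exact_mod_cast hl a (by simp)
    simp only [cfT]
    refine ⟨by have := h.1; positivity, ?_⟩
    rw [div_lt_one (by linarith [h.1])]
    linarith [h.1]

lemma continuousOn_cfT (l : List ℕ) (hl : ∀ a ∈ l, 1 ≤ a) :
    ContinuousOn (cfT l) (Set.Ici 0) := by
  induction l with
  | nil => exact continuousOn_id
  | cons a l ih =>
    have ha : (1 : ℝ) ≤ a := by exact_mod_cast hl a (by simp)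
    refine continuousOn_const.div (continuousOn_const.add (ih fun x hx => hl x (by simp [hx]))) ?_
    intro t ht
    have := cfT_nonneg l (t := t) ht
    positivity

lemma gaussIter_succ_left (x : ℝ) (n : ℕ) :
    gaussIter x (n + 1) = gaussIter (1 / Int.fract x) n := by
  induction n with
  | zero => rfl
  | succ n ih => rw [gaussIter, ih, gaussIter]

lemma gaussIter_natCast_add (a : ℕ) (x : ℝ) (n : ℕ) :
    gaussIter (a + x) n = gaussIter x n := by
  induction n with
  | zero => simp [gaussIter]
  | succ n ih => rw [gaussIter, ih, gaussIter]

/-- The Gauss map strips the digits `l` off `[0; l₁, …, lₖ + t]` and leaves the tail `t`. -/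
lemma gaussIter_cfT (l : List ℕ) (hl : ∀ a ∈ l, 1 ≤ a) {t : ℝ} (ht : t ∈ Set.Ioo (0 : ℝ) 1) :
    gaussIter (cfT l t) l.length = t := by
  induction l with
  | nil => simpa [gaussIter, cfT] using Int.fract_eq_self.2 ⟨ht.1.le, ht.2⟩
  | cons a l ih =>
    have h := cfT_mem_Ioo (a :: l) hl ht
    rw [List.length_cons, gaussIter_succ_left, Int.fract_eq_self.2 ⟨h.1.le, h.2⟩]
    simp only [cfT, one_div_one_div]
    rw [gaussIter_natCast_add]
    exact ih fun x hx => hl x (by simp [hx])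

/-- A number strictly between `[0; l, a]` and `[0; l, a + 1]` has `a` as the partial quotient
following `l`. The tail is found by the intermediate value theorem, so that neither the
orientation of the interval nor the monotonicity of `cfT l` matters. -/
lemma pq_eq_of_between (l : List ℕ) (hl : ∀ a ∈ l, 1 ≤ a) (a : ℕ) (ha : 1 ≤ a) (x : ℝ)
    (hx : (x - cf (l ++ [a])) * (x - cf (l ++ [a + 1])) < 0) :
    pq x (l.length + 1) = a ∧ pqDefined x (l.length + 1) := by
  have ha' : (1 : ℝ) ≤ a := by exact_mod_cast ha
  have hle : (1 : ℝ) / ((a + 1 : ℕ) : ℝ) ≤ 1 / a := by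
    push_cast
    exact one_div_le_one_div_of_le (by linarith) (by linarith)
  have hsub : Set.uIcc ((1 : ℝ) / ((a + 1 : ℕ) : ℝ)) (1 / a) ⊆ Set.Ici 0 := by
    rw [Set.uIcc_of_le hle]
    intro y hy
    exact le_trans (by positivity) hy.1
  have hivt := intermediate_value_uIcc ((continuousOn_cfT l hl).mono hsub)
  rw [← cf_append, ← cf_append] at hivt
  have hxm : x ∈ Set.uIcc (cf (l ++ [a + 1])) (cf (l ++ [a])) := by
    rw [Set.mem_uIcc]
    rcases mul_neg_iff.1 hx with h | h
    · right; constructor <;> linarith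
    · left; constructor <;> linarith
  obtain ⟨t, ht, rfl⟩ := hivt hxm
  rw [Set.uIcc_of_le hle] at ht
  have h1 : t ≠ 1 / ((a + 1 : ℕ) : ℝ) := by
    rintro rfl
    rw [← cf_append] at hx
    simp at hx
  have h2 : t ≠ 1 / (a : ℝ) := by
    rintro rfl
    rw [← cf_append] at hx
    simp at hx
  have h1' := lt_of_le_of_ne ht.1 (Ne.symm h1)
  have h2' := lt_of_le_of_ne ht.2 h2
  have ht0 : 0 < t := lt_trans (by positivity) h1'
  have ht1 : t < 1 := lt_of_lt_of_le h2' (by rw [div_le_one (by linarith)]; exact ha')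
  have hg := gaussIter_cfT l hl (t := t) ⟨ht0, ht1⟩
  refine ⟨?_, ?_⟩
  · rw [pq, Nat.add_sub_cancel, hg, Nat.floor_eq_iff (by positivity)]
    push_cast at h1'
    rw [lt_div_iff₀ (by linarith)] at h2'
    rw [div_lt_iff₀ (by linarith)] at h1'
    rw [le_div_iff₀ ht0, div_lt_iff₀ ht0]
    constructor <;> nlinarith
  · rw [pqDefined, Nat.add_sub_cancel, hg]
    exact ht0.ne'

/-! ### Convergents and their distance to the limit -/

lemma Q_pos (a : ℕ → ℕ) (ha : ∀ n, 1 ≤ a n) (n : ℕ) : 0 < Q a (n + 1) := by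
  induction n with
  | zero => exact Nat.one_pos
  | succ n ih => rw [Q, cont_succ]; have := ha n; positivity

lemma cfT_digs (a : ℕ → ℕ) (ha : ∀ n, 1 ≤ a n) (n : ℕ) : ∀ t : ℝ, 0 ≤ t →
    cfT (digs a n) t = (P a (n + 1) + t * P a n) / (Q a (n + 1) + t * Q a n) := by
  induction n with
  | zero => intro t _; simp [digs, cfT, cont]
  | succ n ih =>
    intro t ht
    have h1 : (1 : ℝ) ≤ a n := by exact_mod_cast ha n
    have hq : (0 : ℝ) < Q a (n + 1) := by exact_mod_cast Q_pos a ha n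
    have hat : (0 : ℝ) < a n + t := by linarith
    rw [digs_succ, cfT_append, ih _ (by positivity), P, Q, cont_succ, cont_succ]
    push_cast
    have hd1 : (Q a (n + 1) : ℝ) + 1 / (a n + t) * Q a n ≠ 0 := by positivity
    have hd2 : (a n * Q a (n + 1) + Q a n : ℝ) + t * Q a (n + 1) ≠ 0 := by positivity
    rw [div_eq_div_iff hd1 hd2]
    field_simp
    ring

/-- The determinant identity `pₙ₋₁ qₙ - pₙ qₙ₋₁ = (-1)ⁿ`. -/
lemma det (a : ℕ → ℕ) (n : ℕ) :
    (P a n * Q a (n + 1) - P a (n + 1) * Q a n : ℝ) = (-1) ^ n := by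
  induction n with
  | zero => simp [cont]
  | succ n ih =>
    rw [pow_succ, ← ih, P, Q, cont_succ, cont_succ]
    push_cast
    ring

lemma cf_digs (a : ℕ → ℕ) (ha : ∀ n, 1 ≤ a n) (n : ℕ) :
    cf (digs a n) = P a (n + 1) / Q a (n + 1) := by
  rw [← cfT_zero, cfT_digs a ha n 0 le_rfl]; simp

/-- How the value of a continued fraction moves when its last digit is changed by `δ`. -/
lemma cf_digs_perturb (a : ℕ → ℕ) (ha : ∀ n, 1 ≤ a n) (n m : ℕ) (δ : ℝ) (hm : (m : ℝ) = a n + δ)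
    (hm1 : 1 ≤ m) :
    cf (digs a n ++ [m]) - cf (digs a (n + 1)) =
      -(-1) ^ n * (δ / (Q a (n + 2) * (Q a (n + 2) + δ * Q a (n + 1)))) := by
  have hq : (0 : ℝ) < Q a (n + 1) := by exact_mod_cast Q_pos a ha n
  have hq2 : (0 : ℝ) < Q a (n + 2) := by exact_mod_cast Q_pos a ha (n + 1)
  have hm1' : (1 : ℝ) ≤ m := by exact_mod_cast hm1
  have hQ : (Q a (n + 2) : ℝ) = a n * Q a (n + 1) + Q a n := by rw [Q, cont_succ]; push_cast; rfl
  have hP : (P a (n + 2) : ℝ) = a n * P a (n + 1) + P a n := by rw [P, cont_succ]; push_cast; rfl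
  have hd : (Q a (n + 2) + δ * Q a (n + 1) : ℝ) = m * Q a (n + 1) + Q a n := by
    rw [hQ, hm]; ring
  have hpos : (0 : ℝ) < m * Q a (n + 1) + Q a n := by positivity
  have hval : cf (digs a n ++ [m]) =
      (m * P a (n + 1) + P a n) / (m * Q a (n + 1) + Q a n) := by
    rw [cf_append, cfT_digs a ha n _ (by positivity)]
    have hd1 : (Q a (n + 1) : ℝ) + 1 / m * Q a n ≠ 0 := by positivity
    rw [div_eq_div_iff hd1 hpos.ne']
    field_simp
  rw [hval, cf_digs a ha, hd, div_sub_div _ _ hpos.ne' hq2.ne']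
  rw [mul_div_assoc', div_eq_div_iff (by positivity) (by positivity)]
  have hdet := det a n
  rw [← hdet, hP, hQ, hm]
  ring

lemma cf_digs_diff (a : ℕ → ℕ) (ha : ∀ n, 1 ≤ a n) (n : ℕ) :
    cf (digs a (n + 1)) - cf (digs a n) = (-1) ^ n * (1 / (Q a (n + 1) * Q a (n + 2))) := by
  have hq : (0 : ℝ) < Q a (n + 1) := by exact_mod_cast Q_pos a ha n
  have hq2 : (0 : ℝ) < Q a (n + 2) := by exact_mod_cast Q_pos a ha (n + 1)
  have hdet := det a (n + 1)
  rw [cf_digs a ha, cf_digs a ha, div_sub_div _ _ hq2.ne' hq.ne', mul_one_div,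
    div_eq_div_iff (by positivity) (by positivity)]
  rw [pow_succ] at hdet
  have : ((-1 : ℝ)) ^ n = -(P a (n + 1) * Q a (n + 1 + 1) - P a (n + 1 + 1) * Q a (n + 1)) := by
    rw [hdet]; ring
  rw [this]; ring

/-- The value of the infinite continued fraction `[0; a 0, a 1, …]`, located by the alternation
of its convergents. -/
lemma exists_value (a : ℕ → ℕ) (ha : ∀ n, 1 ≤ a n) :
    ∃ β : ℝ, ∀ n, 0 ≤ (-1) ^ n * (β - cf (digs a n)) := by
  have hq : ∀ n, (0 : ℝ) < Q a (n + 1) := fun n => by exact_mod_cast Q_pos a ha n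
  have hmono : ∀ n, (Q a (n + 1) : ℝ) ≤ Q a (n + 3) := fun n => by
    exact_mod_cast (Nat.le_add_left _ _ : Q a (n + 1) ≤ a (n + 1) * Q a (n + 2) + Q a (n + 1))
  have hu : ∀ n, (1 : ℝ) / (Q a (n + 2) * Q a (n + 3)) ≤ 1 / (Q a (n + 1) * Q a (n + 2)) := by
    intro n
    apply one_div_le_one_div_of_le (mul_pos (hq n) (hq (n + 1)))
    rw [mul_comm]
    exact mul_le_mul_of_nonneg_left (hmono n) (hq (n + 1)).le |>.trans' (by rw [mul_comm])
  have hev : ∀ k : ℕ, ((-1 : ℝ)) ^ (2 * k) = 1 := fun k => by simp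
  have h1 : ∀ k, cf (digs a (2 * k)) ≤ cf (digs a (2 * k + 1)) := by
    intro k
    have := cf_digs_diff a ha (2 * k)
    rw [hev, one_mul] at this
    have h := one_div_nonneg.2 (mul_pos (hq (2 * k)) (hq (2 * k + 1))).le
    linarith
  have h2 : ∀ k, cf (digs a (2 * k)) ≤ cf (digs a (2 * (k + 1))) := by
    intro k
    have e1 := cf_digs_diff a ha (2 * k)
    have e2 := cf_digs_diff a ha (2 * k + 1)
    rw [pow_succ] at e2
    rw [hev, one_mul] at e1 e2
    have := hu (2 * k)
    rw [show 2 * (k + 1) = 2 * k + 1 + 1 by ring]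
    linarith
  have h3 : ∀ k, cf (digs a (2 * (k + 1) + 1)) ≤ cf (digs a (2 * k + 1)) := by
    intro k
    have e1 := cf_digs_diff a ha (2 * k + 1)
    have e2 := cf_digs_diff a ha (2 * k + 2)
    rw [pow_succ, pow_succ] at e2
    rw [pow_succ] at e1
    rw [hev] at e1 e2
    have := hu (2 * k + 1)
    rw [show 2 * (k + 1) + 1 = 2 * k + 2 + 1 by ring]
    linarith
  have hanti : Antitone fun k => Set.Icc (cf (digs a (2 * k))) (cf (digs a (2 * k + 1))) :=
    antitone_nat_of_succ_le fun k => Set.Icc_subset_Icc (h2 k) (h3 k)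
  have hmem := Set.mem_iInter.1 (ciSup_mem_iInter_Icc_of_antitone_Icc hanti h1)
  -- Even convergents increase, odd ones decrease, and the limit lies between them.
  refine ⟨⨆ k, cf (digs a (2 * k)), fun n => ?_⟩
  rcases Nat.even_or_odd' n with ⟨k, rfl | rfl⟩
  · rw [hev, one_mul]; linarith [(hmem k).1]
  · rw [pow_succ, hev]; linarith [(hmem k).2]

/-- Two-sided bounds for the distance to the `n`-th convergent. -/
lemma value_bounds (a : ℕ → ℕ) (ha : ∀ n, 1 ≤ a n) (β : ℝ)
    (hβ : ∀ n, 0 ≤ (-1) ^ n * (β - cf (digs a n))) (n : ℕ) :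
    (1 : ℝ) / (Q a (n + 1) * (Q a (n + 2) + Q a (n + 1))) ≤ (-1) ^ n * (β - cf (digs a n)) ∧
      (-1) ^ n * (β - cf (digs a n)) ≤ 1 / (Q a (n + 1) * Q a (n + 2)) := by
  have hsq : ∀ n : ℕ, ((-1 : ℝ) ^ n) * (-1) ^ n = 1 := fun n => by rw [← mul_pow]; simp
  have hstep : ∀ n, (-1) ^ n * (β - cf (digs a n)) + (-1) ^ (n + 1) * (β - cf (digs a (n + 1))) =
      1 / (Q a (n + 1) * Q a (n + 2)) := by
    intro n
    have := cf_digs_diff a ha n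
    have h : (-1 : ℝ) ^ n * (cf (digs a (n + 1)) - cf (digs a n)) =
        1 / (Q a (n + 1) * Q a (n + 2)) := by rw [this, ← mul_assoc, hsq, one_mul]
    rw [← h, pow_succ]; ring
  refine ⟨?_, by linarith [hstep n, hβ (n + 1)]⟩
  have hlow : (1 : ℝ) / (Q a (n + 1) * Q a (n + 2)) - 1 / (Q a (n + 2) * Q a (n + 3)) ≤
      (-1) ^ n * (β - cf (digs a n)) := by
    linarith [hstep n, hstep (n + 1), hβ (n + 2)]
  refine le_trans ?_ hlow
  have h1 : (0 : ℝ) < Q a (n + 1) := by exact_mod_cast Q_pos a ha n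
  have h2 : (0 : ℝ) < Q a (n + 2) := by exact_mod_cast Q_pos a ha (n + 1)
  have h3 : (0 : ℝ) < Q a (n + 3) := by exact_mod_cast Q_pos a ha (n + 2)
  have hQ : (Q a (n + 3) : ℝ) = a (n + 1) * Q a (n + 2) + Q a (n + 1) := by
    rw [Q, cont_succ]; push_cast; rfl
  have ha1 : (1 : ℝ) ≤ a (n + 1) := by exact_mod_cast ha (n + 1)
  rw [div_sub_div _ _ (by positivity) (by positivity),
    div_le_div_iff₀ (by positivity) (by positivity), hQ]
  have : (0 : ℝ) ≤ Q a (n + 1) * (Q a (n + 2) * (Q a (n + 2) * (Q a (n + 1) * (a (n + 1) - 1)))) := by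
    have : (0 : ℝ) ≤ a (n + 1) - 1 := by linarith
    positivity
  nlinarith [this]

/-! ### Digit sequences reproduced by the algorithm -/

lemma Q_step (a : ℕ → ℕ) (n : ℕ) : (Q a (n + 2) : ℝ) = a n * Q a (n + 1) + Q a n := by
  rw [Q, cont_succ]; push_cast; rfl

lemma length_digs (a : ℕ → ℕ) (n : ℕ) : (digs a n).length = n := by simp [digs]

lemma one_le_of_mem_digs {a : ℕ → ℕ} (ha : ∀ n, 1 ≤ a n) (n : ℕ) : ∀ x ∈ digs a n, 1 ≤ x := by
  intro x hx
  obtain ⟨i, -, rfl⟩ := List.mem_map.1 hx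
  exact ha i

/-- The arithmetic conditions on the digits under which Shulga's algorithm reproduces them.
With `qₙ`, `sₙ` the denominators for `b`, `c`, the inequality `stepC` says
`1/(sₙ₊₁sₙ₊₂) + 1/(qₙ₊₁qₙ₊₂) < 1/(sₙ₊₁(sₙ₊₁+sₙ))`, and `stepB` says
`1/(sₙsₙ₊₁) < 1/(qₙ₊₁(qₙ₊₁-qₙ)) + 1/(qₙ₊₁((5n+9)qₙ₊₁+qₙ))`, with denominators cleared.
Here `5n + 9` is an upper bound for `bₙ₊₂ + 1`. The sequences are indexed from `0`, so `b n` is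
`bₙ₊₁` and `Q b (n + 1)` is `qₙ`. -/
structure Admissible (b c : ℕ → ℕ) : Prop where
  le_b : ∀ n, 4 * n + 2 ≤ b n
  b_lt_c : ∀ n, b n < c n
  c_lt : ∀ n, c n < 5 * n + 5
  stepC : ∀ n, (Q b (n + 2) * Q b (n + 3) + Q c (n + 2) * Q c (n + 3)) *
    (Q c (n + 2) + Q c (n + 1)) < Q c (n + 3) * (Q b (n + 2) * Q b (n + 3))
  stepB : ∀ n, Q b (n + 2) * ((5 * n + 9) * Q b (n + 2) + Q b (n + 1)) <
    Q c (n + 1) * Q c (n + 2) * (5 * n + 10) +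
      Q b (n + 1) * ((5 * n + 9) * Q b (n + 2) + Q b (n + 1))

namespace Admissible

lemma one_le_b {b c : ℕ → ℕ} (h : Admissible b c) (n : ℕ) : 1 ≤ b n := by have := h.le_b n; omega

lemma one_le_c {b c : ℕ → ℕ} (h : Admissible b c) (n : ℕ) : 1 ≤ c n := by have := h.le_b n; have := h.b_lt_c n; omega

lemma qb_pos {b c : ℕ → ℕ} (h : Admissible b c) (n : ℕ) : (0 : ℝ) < Q b (n + 1) := by exact_mod_cast Q_pos b h.one_le_b n

lemma qc_pos {b c : ℕ → ℕ} (h : Admissible b c) (n : ℕ) : (0 : ℝ) < Q c (n + 1) := by exact_mod_cast Q_pos c h.one_le_c n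

lemma stepC' {b c : ℕ → ℕ} (h : Admissible b c) (n : ℕ) :
    1 / ((Q c (n + 2) : ℝ) * Q c (n + 3)) + 1 / (Q b (n + 2) * Q b (n + 3)) <
      1 / (Q c (n + 2) * (Q c (n + 2) + Q c (n + 1))) := by
  have h1 := h.qb_pos (n + 1)
  have h2 := h.qb_pos (n + 2)
  have h3 := h.qc_pos n
  have h4 := h.qc_pos (n + 1)
  have h5 := h.qc_pos (n + 2)
  have hC : ((Q b (n + 2) * Q b (n + 3) + Q c (n + 2) * Q c (n + 3)) *
    (Q c (n + 2) + Q c (n + 1)) : ℝ) < Q c (n + 3) * (Q b (n + 2) * Q b (n + 3)) := by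
    exact_mod_cast h.stepC n
  rw [div_add_div _ _ (by positivity) (by positivity),
    div_lt_div_iff₀ (by positivity) (by positivity)]
  have := mul_lt_mul_of_pos_left hC h4
  nlinarith [this]

/-- In particular the ratio `sₙ₊₁ / qₙ₊₁` of the denominators has square less than
`qₙ₊₂ / qₙ₊₁`. -/
lemma sq_lt {b c : ℕ → ℕ} (h : Admissible b c) (n : ℕ) :
    (Q c (n + 2) : ℝ) * (Q c (n + 2) + Q c (n + 1)) < Q b (n + 2) * Q b (n + 3) := by
  have h1 := h.qb_pos (n + 1)
  have h2 := h.qb_pos (n + 2)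
  have h3 := h.qc_pos n
  have h4 := h.qc_pos (n + 1)
  have h5 := h.qc_pos (n + 2)
  have hC := h.stepC' n
  have hpos : 0 < 1 / ((Q c (n + 2) : ℝ) * Q c (n + 3)) := by positivity
  exact lt_of_one_div_lt_one_div (by positivity) (by linarith)

lemma stepB' {b c : ℕ → ℕ} (h : Admissible b c) (n : ℕ) :
    1 / ((Q c (n + 1) : ℝ) * Q c (n + 2)) <
      1 / (Q b (n + 2) * (Q b (n + 2) - Q b (n + 1))) +
        1 / (Q b (n + 2) * (Q b (n + 3) + Q b (n + 2))) := by
  have h0 := h.qb_pos n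
  have h1 := h.qb_pos (n + 1)
  have h3 := h.qc_pos n
  have h4 := h.qc_pos (n + 1)
  have hb : (2 : ℝ) ≤ b n := by
    have : 2 ≤ b n := by have := h.le_b n; omega
    exact_mod_cast this
  have hq0 : (0 : ℝ) ≤ Q b n := Nat.cast_nonneg _
  have hlt : (0 : ℝ) < Q b (n + 2) - Q b (n + 1) := by rw [Q_step]; nlinarith
  have hb' : (b (n + 1) : ℝ) + 1 ≤ 5 * n + 9 := by
    have : b (n + 1) + 1 ≤ 5 * n + 9 := by have := h.b_lt_c (n + 1); have := h.c_lt (n + 1); omega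
    exact_mod_cast this
  have hle : (Q b (n + 3) + Q b (n + 2) : ℝ) ≤ (5 * n + 9) * Q b (n + 2) + Q b (n + 1) := by
    rw [Q_step b (n + 1)]; nlinarith
  have h2 := h.qb_pos (n + 2)
  refine lt_of_lt_of_le ?_ (add_le_add le_rfl (one_div_le_one_div_of_le (by positivity)
    (mul_le_mul_of_nonneg_left hle h1.le)))
  have hB : (Q b (n + 2) * ((5 * n + 9) * Q b (n + 2) + Q b (n + 1)) : ℝ) <
    Q c (n + 1) * Q c (n + 2) * (5 * n + 10) +
      Q b (n + 1) * ((5 * n + 9) * Q b (n + 2) + Q b (n + 1)) := by exact_mod_cast h.stepB n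
  rw [div_add_div _ _ (by positivity) (by positivity),
    div_lt_div_iff₀ (by positivity) (by positivity)]
  have := mul_lt_mul_of_pos_left hB h1
  have := mul_lt_mul_of_pos_left this h1
  nlinarith [this]

/-- Step `B` of the algorithm: after the convergent of `γ` is removed, the next partial quotient
is `b n - 1`. -/
lemma pq_b {b c : ℕ → ℕ} (h : Admissible b c) {β γ : ℝ}
    (hβ : ∀ n, 0 ≤ (-1) ^ n * (β - cf (digs b n)))
    (hγ : ∀ n, 0 ≤ (-1) ^ n * (γ - cf (digs c n))) (n : ℕ) :
    pq (β + γ - cf (digs c n)) (n + 1) = b n - 1 ∧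
      pqDefined (β + γ - cf (digs c n)) (n + 1) := by
  have hb2 : 2 ≤ b n := by have := h.le_b n; omega
  have key := pq_eq_of_between (digs b n) (one_le_of_mem_digs h.one_le_b n) (b n - 1) (by omega)
    (β + γ - cf (digs c n))
  rw [length_digs] at key
  apply key
  rw [show b n - 1 + 1 = b n by omega, ← digs_succ]
  have hpert := cf_digs_perturb b h.one_le_b n (b n - 1) (-1)
    (by rw [Nat.cast_sub (by omega)]; push_cast; ring) (by omega)
  have hg := value_bounds c h.one_le_c γ hγ n
  have he := value_bounds b h.one_le_b β hβ (n + 1)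
  have hB := h.stepB' n
  have h0 := h.qb_pos n
  have h1 := h.qb_pos (n + 1)
  have h2 := h.qb_pos (n + 2)
  have h3 := h.qc_pos n
  have h4 := h.qc_pos (n + 1)
  have hmono : (Q c (n + 1) : ℝ) ≤ Q c (n + 2) := by
    rw [Q_step]
    have : (1 : ℝ) ≤ c n := by exact_mod_cast h.one_le_c n
    have : (0 : ℝ) ≤ Q c n := Nat.cast_nonneg _
    nlinarith
  have hlow : 1 / ((Q b (n + 2) : ℝ) * Q b (n + 3)) <
      1 / (Q c (n + 1) * (Q c (n + 2) + Q c (n + 1))) := by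
    apply one_div_lt_one_div_of_lt (by positivity)
    nlinarith [h.sq_lt n]
  -- Up to the sign `(-1) ^ n`, the two distances to the endpoints are `g - e - D` and `g - e`.
  set g := (-1 : ℝ) ^ n * (γ - cf (digs c n)) with hgdef
  set e := (-1 : ℝ) ^ (n + 1) * (β - cf (digs b (n + 1))) with hedef
  set D : ℝ := 1 / (Q b (n + 2) * (Q b (n + 2) - Q b (n + 1))) with hD
  have hsq : ((-1 : ℝ) ^ n) * (-1) ^ n = 1 := by rw [← mul_pow]; simp
  have hD' : (-1 : ℝ) / (Q b (n + 2) * (Q b (n + 2) + -1 * Q b (n + 1))) = -D := by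
    rw [hD, neg_div]; congr 3; ring
  rw [hD'] at hpert
  have e1 : β + γ - cf (digs c n) - cf (digs b (n + 1)) = (-1) ^ n * (g - e) := by
    rw [hgdef, hedef, pow_succ]
    linear_combination (-(γ - cf (digs c n)) - (β - cf (digs b (n + 1)))) * hsq
  have e2 : β + γ - cf (digs c n) - cf (digs b n ++ [b n - 1]) = (-1) ^ n * (g - e - D) := by
    linear_combination e1 - hpert
  rw [e1, e2]
  have hpos : 0 < g - e := by linarith [hg.1, he.2]
  have hneg : g - e - D < 0 := by linarith [hg.2, he.1]
  have : (-1 : ℝ) ^ n * (g - e - D) * ((-1) ^ n * (g - e)) = (g - e - D) * (g - e) := by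
    linear_combination (g - e - D) * (g - e) * hsq
  rw [this]
  exact mul_neg_of_neg_of_pos hneg hpos

/-- Step `C` of the algorithm: after the convergent of `β` is removed, the next partial quotient
is `c n`. -/
lemma pq_c {b c : ℕ → ℕ} (h : Admissible b c) {β γ : ℝ}
    (hβ : ∀ n, 0 ≤ (-1) ^ n * (β - cf (digs b n)))
    (hγ : ∀ n, 0 ≤ (-1) ^ n * (γ - cf (digs c n))) (n : ℕ) :
    pq (β + γ - cf (digs b (n + 1))) (n + 1) = c n ∧
      pqDefined (β + γ - cf (digs b (n + 1))) (n + 1) := by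
  have key := pq_eq_of_between (digs c n) (one_le_of_mem_digs h.one_le_c n) (c n) (h.one_le_c n)
    (β + γ - cf (digs b (n + 1)))
  rw [length_digs] at key
  apply key
  rw [← digs_succ]
  have hpert := cf_digs_perturb c h.one_le_c n (c n + 1) 1 (by push_cast; ring) (by omega)
  have hg := value_bounds c h.one_le_c γ hγ (n + 1)
  have he := value_bounds b h.one_le_b β hβ (n + 1)
  have hC := h.stepC' n
  have h1 := h.qb_pos (n + 1)
  have h2 := h.qb_pos (n + 2)
  have hpos := h.qc_pos (n + 1)
  have hpos' := h.qc_pos (n + 2)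
  have hg1 : 0 < 1 / ((Q c (n + 2) : ℝ) * (Q c (n + 3) + Q c (n + 2))) := by positivity
  rw [one_mul] at hpert
  -- Up to the sign `-(-1) ^ n`, the two distances to the endpoints are `g + e` and `g + e - D`.
  set g := (-1 : ℝ) ^ (n + 1) * (γ - cf (digs c (n + 1))) with hgdef
  set e := (-1 : ℝ) ^ (n + 1) * (β - cf (digs b (n + 1))) with hedef
  set D : ℝ := 1 / (Q c (n + 2) * (Q c (n + 2) + Q c (n + 1))) with hD
  have hsq : ((-1 : ℝ) ^ n) * (-1) ^ n = 1 := by rw [← mul_pow]; simp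
  have e1 : β + γ - cf (digs b (n + 1)) - cf (digs c (n + 1)) = -(-1) ^ n * (g + e) := by
    rw [hgdef, hedef, pow_succ]
    linear_combination (-(γ - cf (digs c (n + 1))) - (β - cf (digs b (n + 1)))) * hsq
  have e2 : β + γ - cf (digs b (n + 1)) - cf (digs c n ++ [c n + 1]) =
      -(-1) ^ n * (g + e - D) := by
    linear_combination e1 - hpert
  rw [e1, e2]
  have hp : 0 < g + e := by linarith [hg.1, hβ (n + 1)]
  have hn : g + e - D < 0 := by linarith [hg.2, he.2]
  have : -(-1 : ℝ) ^ n * (g + e) * (-(-1) ^ n * (g + e - D)) = (g + e) * (g + e - D) := by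
    linear_combination (g + e - D) * (g + e) * hsq
  rw [this]
  exact mul_neg_of_pos_of_neg hp hn

lemma shulgaList_eq {b c : ℕ → ℕ} (h : Admissible b c) {β γ : ℝ}
    (hβ : ∀ n, 0 ≤ (-1) ^ n * (β - cf (digs b n)))
    (hγ : ∀ n, 0 ≤ (-1) ^ n * (γ - cf (digs c n))) (n : ℕ) :
    shulgaList (β + γ) n = (List.range n).map fun i => (b i, c i) := by
  induction n with
  | zero => rfl
  | succ n ih =>
    have hb : ((List.range n).map fun i => (b i, c i)).map Prod.fst = digs b n := by
      simp [digs, Function.comp_def]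
    have hc : ((List.range n).map fun i => (b i, c i)).map Prod.snd = digs c n := by
      simp [digs, Function.comp_def]
    have hb1 : b n - 1 + 1 = b n := by have := h.le_b n; omega
    simp only [shulgaList]
    rw [ih, hb, hc, (h.pq_b hβ hγ n).1, hb1, ← digs_succ, (h.pq_c hβ hγ n).1, List.range_succ,
      List.map_append]
    rfl

lemma bList_eq {b c : ℕ → ℕ} (h : Admissible b c) {β γ : ℝ}
    (hβ : ∀ n, 0 ≤ (-1) ^ n * (β - cf (digs b n)))
    (hγ : ∀ n, 0 ≤ (-1) ^ n * (γ - cf (digs c n))) (n : ℕ) : bList (β + γ) n = digs b n := by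
  rw [bList, h.shulgaList_eq hβ hγ]; simp [digs, Function.comp_def]

lemma cList_eq {b c : ℕ → ℕ} (h : Admissible b c) {β γ : ℝ}
    (hβ : ∀ n, 0 ≤ (-1) ^ n * (β - cf (digs b n)))
    (hγ : ∀ n, 0 ≤ (-1) ^ n * (γ - cf (digs c n))) (n : ℕ) : cList (β + γ) n = digs c n := by
  rw [cList, h.shulgaList_eq hβ hγ]; simp [digs, Function.comp_def]

/-- If the sum were `u / v`, it would differ from the sum of the two `n`-th convergents by at
least `1 / (v qₙ sₙ)`. The difference is at most `2 / (qₙ qₙ₊₁)`, so `bₙ₊₁ ≤ 2 v sₙ / qₙ`, whereas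
`(sₙ / qₙ)²` is at most about `bₙ₊₁` and `bₙ₊₁` is unbounded. -/
lemma irrational {b c : ℕ → ℕ} (h : Admissible b c) {β γ : ℝ}
    (hβ : ∀ n, 0 ≤ (-1) ^ n * (β - cf (digs b n)))
    (hγ : ∀ n, 0 ≤ (-1) ^ n * (γ - cf (digs c n))) : Irrational (β + γ) := by
  rintro ⟨r, hr⟩
  obtain ⟨n, hn⟩ := exists_nat_gt ((4 * (r.den : ℝ) ^ 2))
  have hg := value_bounds c h.one_le_c γ hγ (n + 1)
  have he := value_bounds b h.one_le_b β hβ (n + 1)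
  have h1 := h.qb_pos (n + 1)
  have h2 := h.qb_pos (n + 2)
  have h3 := h.qc_pos (n + 1)
  have h4 := h.qc_pos (n + 2)
  have h5 := h.qc_pos n
  have h6 := h.qb_pos n
  have hlo : 0 < 1 / ((Q c (n + 2) : ℝ) * (Q c (n + 3) + Q c (n + 2))) := by positivity
  have hlo' : 0 < 1 / ((Q b (n + 2) : ℝ) * (Q b (n + 3) + Q b (n + 2))) := by positivity
  have hle : ∀ k, (Q b k ≤ Q c k ∧ Q b (k + 1) ≤ Q c (k + 1)) := by
    intro k
    induction k with
    | zero => simp [cont]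
    | succ k ih =>
      refine ⟨ih.2, ?_⟩
      rw [Q, cont_succ, Q, cont_succ]
      exact add_le_add (Nat.mul_le_mul (h.b_lt_c k).le ih.2) ih.1
  have hqs2 : (Q b (n + 2) : ℝ) ≤ Q c (n + 2) := by exact_mod_cast (hle (n + 2)).1
  have hqs3 : (Q b (n + 3) : ℝ) ≤ Q c (n + 3) := by exact_mod_cast (hle (n + 2)).2
  have hup : 1 / ((Q c (n + 2) : ℝ) * Q c (n + 3)) ≤ 1 / (Q b (n + 2) * Q b (n + 3)) :=
    one_div_le_one_div_of_le (by positivity) (mul_le_mul hqs2 hqs3 h2.le h3.le)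
  have hd : (0 : ℝ) < r.den := by exact_mod_cast r.den_pos
  have hcb := cf_digs b h.one_le_b (n + 1)
  have hcc := cf_digs c h.one_le_c (n + 1)
  have hrv : β + γ = r.num / r.den := by rw [← hr]; exact_mod_cast (Rat.num_div_den r).symm
  -- The sum minus its approximation is positive, and an integer once multiplied by the
  -- common denominator.
  set x := (-1 : ℝ) ^ (n + 1) * (β + γ - cf (digs b (n + 1)) - cf (digs c (n + 1))) with hx
  have hxeq : x = (-1 : ℝ) ^ (n + 1) * (γ - cf (digs c (n + 1))) +
      (-1 : ℝ) ^ (n + 1) * (β - cf (digs b (n + 1))) := by rw [hx]; ring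
  have hx0 : 0 < x := by linarith [hg.1, he.1]
  have hx1 : x ≤ 2 * (1 / (Q b (n + 2) * Q b (n + 3))) := by linarith [hg.2, he.2]
  obtain ⟨k, hk⟩ : ∃ k : ℤ, x * (r.den * Q b (n + 2) * Q c (n + 2)) = k := by
    refine ⟨(-1) ^ (n + 1) * (r.num * Q b (n + 2) * Q c (n + 2)
      - P b (n + 2) * r.den * Q c (n + 2) - P c (n + 2) * r.den * Q b (n + 2)), ?_⟩
    rw [hx, hrv, hcb, hcc]
    push_cast
    field_simp
  have hk1 : (1 : ℝ) ≤ k := by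
    have : (0 : ℝ) < k := by rw [← hk]; positivity
    exact_mod_cast this
  have hmain : (Q b (n + 3) : ℝ) ≤ 2 * r.den * Q c (n + 2) := by
    have h7 : x * (r.den * Q b (n + 2) * Q c (n + 2)) ≤
        2 * (1 / (Q b (n + 2) * Q b (n + 3))) * (r.den * Q b (n + 2) * Q c (n + 2)) :=
      mul_le_mul_of_nonneg_right hx1 (by positivity)
    have h8 : 2 * (1 / ((Q b (n + 2) : ℝ) * Q b (n + 3))) * (r.den * Q b (n + 2) * Q c (n + 2)) =
        2 * r.den * Q c (n + 2) / Q b (n + 3) := by field_simp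
    rw [h8, hk] at h7
    have := hk1.trans h7
    rwa [le_div_iff₀ h2, one_mul] at this
  have hsq : (Q c (n + 2) : ℝ) ^ 2 < Q b (n + 2) * Q b (n + 3) := by nlinarith [h.sq_lt n]
  have hbig : (Q b (n + 3) : ℝ) ^ 2 < 4 * r.den ^ 2 * (Q b (n + 2) * Q b (n + 3)) :=
    calc (Q b (n + 3) : ℝ) ^ 2 ≤ (2 * r.den * Q c (n + 2)) ^ 2 := by gcongr
      _ = 4 * r.den ^ 2 * (Q c (n + 2) : ℝ) ^ 2 := by ring
      _ < _ := by gcongr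
  have hbig' : (Q b (n + 3) : ℝ) < 4 * r.den ^ 2 * Q b (n + 2) := by
    have : (Q b (n + 3) : ℝ) * Q b (n + 3) < (4 * r.den ^ 2 * Q b (n + 2)) * Q b (n + 3) := by
      linarith
    exact lt_of_mul_lt_mul_right this h2.le
  have hbn : (n : ℝ) ≤ b (n + 1) := by
    have : n ≤ b (n + 1) := by have := h.le_b (n + 1); omega
    exact_mod_cast this
  have hq := Q_step b (n + 1)
  have := mul_lt_mul_of_pos_right (hn.trans_le hbn) h1
  linarith

lemma mem_Icc {b c : ℕ → ℕ} (h : Admissible b c) {β γ : ℝ}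
    (hβ : ∀ n, 0 ≤ (-1) ^ n * (β - cf (digs b n)))
    (hγ : ∀ n, 0 ≤ (-1) ^ n * (γ - cf (digs c n))) : β + γ ∈ Set.Icc (0 : ℝ) 1 := by
  have hg := value_bounds c h.one_le_c γ hγ 0
  have he := value_bounds b h.one_le_b β hβ 0
  have hb0 : (2 : ℝ) ≤ b 0 := by exact_mod_cast h.le_b 0
  have hc0 : (2 : ℝ) ≤ c 0 := by exact_mod_cast (h.le_b 0).trans (h.b_lt_c 0).le
  have e0 := hβ 0
  have g0 := hγ 0
  simp [digs, cf, cont] at hg he e0 g0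
  have hb1 : (b 0 : ℝ)⁻¹ ≤ 2⁻¹ := inv_anti₀ (by norm_num) hb0
  have hc1 : (c 0 : ℝ)⁻¹ ≤ 2⁻¹ := inv_anti₀ (by norm_num) hc0
  constructor <;> linarith [hg.2, he.2]

end Admissible

theorem stmt9_of_admissible {b c : ℕ → ℕ} (h : Admissible b c) :
    ∃ α : ℝ, α ∈ Set.Icc (0 : ℝ) 1 ∧ Irrational α ∧ (∀ n : ℕ, shulgaDefined α n) ∧
    ∀ n : ℕ, 1 ≤ n →
      4 * n - 2 ≤ shulgaB α n ∧ shulgaB α n < shulgaC α n ∧ shulgaC α n < 5 * n := by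
  obtain ⟨β, hβ⟩ := exists_value b h.one_le_b
  obtain ⟨γ, hγ⟩ := exists_value c h.one_le_c
  refine ⟨β + γ, h.mem_Icc hβ hγ, h.irrational hβ hγ, ?_, ?_⟩
  · intro n k _
    rw [h.cList_eq hβ hγ, h.bList_eq hβ hγ]
    exact ⟨(h.pq_b hβ hγ k).2, (h.pq_c hβ hγ k).2⟩
  · intro n hn
    obtain ⟨m, rfl⟩ : ∃ m, n = m + 1 := ⟨n - 1, by omega⟩
    have hB : shulgaB (β + γ) (m + 1) = b m := by
      rw [shulgaB, h.shulgaList_eq hβ hγ, List.range_succ]; simp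
    have hC : shulgaC (β + γ) (m + 1) = c m := by
      rw [shulgaC, h.shulgaList_eq hβ hγ, List.range_succ]; simp
    rw [hB, hC]
    have := h.le_b m
    have := h.b_lt_c m
    have := h.c_lt m
    omega

/-! ### The growth of the squared ratio of the denominators -/

/-- With `T = b + θ` standing for `qₙ₊₁ / qₙ`, the increment of `R` is at least `2 R (d - θ) / T`,
and `R / T ≥ 9 / 10`. -/
lemma step_lower (n R σ θ b d : ℝ) (hn : 14 ≤ n) (hσ0 : 0 ≤ σ) (hθ : θ ≤ 1 / 50) (hθ0 : 0 ≤ θ)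
    (hb : b ≤ R + 17 / 5) (hR : 4 * n - 7 / 5 ≤ R) (hb2 : 4 * n + 2 ≤ b) (hd2 : 2 ≤ d)
    (hd : d = 3 ∧ R < 9 / 2 * n ∨ d = 2 ∧ 9 / 2 * n ≤ R) :
    (4 * (n + 1) - 7 / 5) * (b + θ) ^ 2 ≤ R * (b + d + σ) ^ 2 := by
  have hR0 : 0 < R := by linarith
  have hT : 0 < b + θ := by linarith
  have h1 : R * (b + d) ^ 2 ≤ R * (b + d + σ) ^ 2 :=
    mul_le_mul_of_nonneg_left (pow_le_pow_left₀ (by linarith) (by linarith) 2) hR0.le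
  have h2 : 9 / 10 * (b + θ) ≤ R := by linarith
  have h3 : 9 / 10 * (b + θ) * (2 * (d - 1 / 50) * (b + θ)) ≤ R * (2 * (d - θ) * (b + θ)) :=
    mul_le_mul h2 (mul_le_mul_of_nonneg_right (by linarith) hT.le)
      (mul_nonneg (by linarith) hT.le) hR0.le
  have h4 : R * (b + θ) ^ 2 + R * (2 * (d - θ) * (b + θ)) ≤ R * (b + d) ^ 2 := by
    have := mul_nonneg hR0.le (sq_nonneg (d - θ))
    linarith
  have h5 : 4 * (n + 1) - 7 / 5 ≤ R + 9 / 5 * (d - 1 / 50) := by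
    rcases hd with ⟨rfl, h⟩ | ⟨rfl, h⟩ <;> linarith
  have h6 := mul_le_mul_of_nonneg_right h5 (sq_nonneg (b + θ))
  linarith

/-- The increment of `R` is at most `2 (d + σ) + (d + σ)² / b`, because `R ≤ b`. -/
lemma step_upper (n R σ θ b d : ℝ) (hn : 14 ≤ n) (hσ0 : 0 ≤ σ) (hσ : σ ≤ 1 / 50) (hθ0 : 0 ≤ θ)
    (hb' : R + 17 / 5 < b + 1) (hb2 : 4 * n + 2 ≤ b) (hd2 : 2 ≤ d) (hd3 : d ≤ 3)
    (hd : d = 3 ∧ R < 9 / 2 * n ∨ d = 2 ∧ 9 / 2 * n ≤ R) (hR' : R < 5 * n - 7 / 5) :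
    R * (b + d + σ) ^ 2 < (5 * (n + 1) - 7 / 5) * (b + θ) ^ 2 := by
  have hb0 : 0 < b := by linarith
  have h1 : R * (b + d + σ) ^ 2 ≤ R * b ^ 2 + 2 * (d + σ) * b ^ 2 + (d + σ) ^ 2 * b := by
    have hp : 0 ≤ 2 * (d + σ) * b + (d + σ) ^ 2 :=
      add_nonneg (mul_nonneg (by linarith) hb0.le) (sq_nonneg _)
    have := mul_le_mul_of_nonneg_right (show R ≤ b by linarith) hp
    linarith
  have h2 : (d + σ) ^ 2 * b ≤ 1 / 5 * b ^ 2 := by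
    have h : (d + σ) ^ 2 ≤ (151 / 50) ^ 2 := pow_le_pow_left₀ (by linarith) (by linarith) 2
    have := mul_le_mul_of_nonneg_right (show (d + σ) ^ 2 ≤ 1 / 5 * b by linarith) hb0.le
    linarith
  have h3 : R + 2 * (d + σ) + 1 / 5 < 5 * (n + 1) - 7 / 5 := by
    rcases hd with ⟨rfl, h⟩ | ⟨rfl, h⟩ <;> linarith
  have h4 : b ^ 2 ≤ (b + θ) ^ 2 := pow_le_pow_left₀ hb0.le (by linarith) 2
  have h5 := mul_lt_mul_of_pos_right h3 (show 0 < b ^ 2 by positivity)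
  have h6 : (5 * (n + 1) - 7 / 5) * b ^ 2 ≤ (5 * (n + 1) - 7 / 5) * (b + θ) ^ 2 :=
    mul_le_mul_of_nonneg_left h4 (by linarith)
  linarith

/-- One step of the digit choice in terms of `R = (sₙ / qₙ)²`, `σ = sₙ₋₁ / sₙ`, `θ = qₙ₋₁ / qₙ`,
`b = bₙ₊₁` and `d = cₙ₊₁ - bₙ₊₁`, so that `b + θ = qₙ₊₁ / qₙ` and `b + d + σ = sₙ₊₁ / sₙ`. The first
two conclusions are the inequalities `stepC` and `stepB`, the last two say that
`(sₙ₊₁ / qₙ₊₁)²` stays in `[4(n + 1) - 7/5, 5(n + 1) - 7/5)`. -/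
lemma step_estimates (n R σ θ b d : ℝ) (hn : 14 ≤ n) (hσ0 : 0 ≤ σ) (hσ : σ * (4 * n - 2) ≤ 1)
    (hθ0 : 0 ≤ θ) (hθ : θ * (4 * n - 2) ≤ 1) (hb : b ≤ R + 17 / 5) (hb' : R + 17 / 5 < b + 1)
    (hR : 4 * n - 7 / 5 ≤ R) (hb2 : 4 * n + 2 ≤ b) (hb5 : b ≤ 5 * n + 1)
    (hd : d = 3 ∧ R < 9 / 2 * n ∨ d = 2 ∧ 9 / 2 * n ≤ R) (hR' : R < 5 * n - 7 / 5) :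
    (R * (b + d + σ) + (b + θ)) * (1 + σ) < (b + d + σ) * (b + θ) ∧
    (b + θ - 1) * ((5 * n + 9) * (b + θ) + 1) < R * (b + d + σ) * (5 * n + 10) ∧
    (4 * (n + 1) - 7 / 5) * (b + θ) ^ 2 ≤ R * (b + d + σ) ^ 2 ∧
    R * (b + d + σ) ^ 2 < (5 * (n + 1) - 7 / 5) * (b + θ) ^ 2 := by
  have hd2 : 2 ≤ d := by rcases hd with h | h <;> linarith [h.1]
  have hd3 : d ≤ 3 := by rcases hd with h | h <;> linarith [h.1]
  have hσ' : σ ≤ 1 / 50 := by nlinarith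
  have hθ' : θ ≤ 1 / 50 := by nlinarith
  -- Both products are at most `(5 n + 5) / (4 n - 2)`, which is below `139 / 100` from `n = 14` on.
  have hσb : σ * (b + d + 1) ≤ 139 / 100 := by nlinarith
  have hθb : θ * b ≤ 139 / 100 := by nlinarith
  have hR0 : 0 < R := by linarith
  refine ⟨?_, ?_, ?_, ?_⟩
  · have h1 : (b + d + σ) * (1 + σ) ≤ b + d + 7 / 5 := by nlinarith
    have h2 : R * ((b + d + σ) * (1 + σ)) ≤ R * (b + d + 7 / 5) :=
      mul_le_mul_of_nonneg_left h1 hR0.le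
    have h3 : R * (b + d + 7 / 5) ≤ (b - 12 / 5) * (b + d + 7 / 5) :=
      mul_le_mul_of_nonneg_right (by linarith) (by linarith)
    have h4 : 0 ≤ θ * (b + d - 1) := mul_nonneg hθ0 (by linarith)
    nlinarith
  · have h1 : (b - 17 / 5) * (b + 2) ≤ R * (b + d + σ) :=
      mul_le_mul (by linarith) (by linarith) (by linarith) hR0.le
    have h2 : (b - 17 / 5) * (b + 2) * (5 * n + 10) ≤ R * (b + d + σ) * (5 * n + 10) :=
      mul_le_mul_of_nonneg_right h1 (by linarith)
    have h3 : (b + θ) ^ 2 ≤ b ^ 2 + 3 := by nlinarith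
    have h4 : (b + θ) ^ 2 * (5 * n + 9) ≤ (b ^ 2 + 3) * (5 * n + 9) :=
      mul_le_mul_of_nonneg_right h3 (by linarith)
    have h5 : 0 ≤ θ * (5 * n + 9) := mul_nonneg hθ0 (by linarith)
    -- `b - 2 * n - 6` is at least `2 * n - 4` and `b` is at least `4 * n + 2`.
    have h6 : 0 < b ^ 2 - 2 * n * b - 6 * b - 49 * n - 95 := by nlinarith
    nlinarith
  · exact step_lower n R σ θ b d hn hσ0 hθ' hθ0 hb hR hb2 hd2 hd
  · exact step_upper n R σ θ b d hn hσ0 hσ' hθ0 hb' hb2 hd2 hd3 hd hR'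

/-! ### The choice of the digits -/

/-- The digits chosen at step `n` when the current denominators are `q` (for `b`) and `s`
(for `c`). From `n = 2` on, `b = ⌊(s/q)² + 17/5⌋`, and `c - b` is `3` or `2` according to whether
`(s/q)²` lies below or above `9n/2`. -/
def choose : ℕ → ℕ → ℕ → ℕ × ℕ
  | 0, _, _ => (2, 4)
  | 1, _, _ => (6, 9)
  | n + 2, q, s =>
    let b := (17 * q ^ 2 + 5 * s ^ 2) / (5 * q ^ 2)
    (b, b + if 2 * s ^ 2 < 9 * (n + 2) * q ^ 2 then 3 else 2)

/-- Consecutive denominators `(qₙ₋₁, qₙ, sₙ₋₁, sₙ)`. -/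
def state : ℕ → ℕ × ℕ × ℕ × ℕ
  | 0 => (0, 1, 0, 1)
  | n + 1 =>
    let u := state n
    let d := choose n u.2.1 u.2.2.2
    (u.2.1, d.1 * u.2.1 + u.1, u.2.2.2, d.2 * u.2.2.2 + u.2.2.1)

/-- The pair of digits `(bₙ₊₁, cₙ₊₁)`. -/
def dig (n : ℕ) : ℕ × ℕ := choose n (state n).2.1 (state n).2.2.2

lemma state_eq (n : ℕ) : state n =
    (Q (fun k => (dig k).1) n, Q (fun k => (dig k).1) (n + 1),
      Q (fun k => (dig k).2) n, Q (fun k => (dig k).2) (n + 1)) := by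
  induction n with
  | zero => rfl
  | succ n ih =>
    rw [Q, Q, cont_succ, cont_succ]
    show ((state n).2.1, (dig n).1 * (state n).2.1 + (state n).1, (state n).2.2.2,
      (dig n).2 * (state n).2.2.2 + (state n).2.2.1) = _
    rw [ih]

/-- The invariant of the digit choice: `(sₙ/qₙ)²` lies in `[4n - 7/5, 5n - 7/5)`, and
consecutive denominators grow by a factor of at least `4n - 2`. -/
def Inv (n q₀ q s₀ s : ℕ) : Prop :=
  0 < q ∧ 0 < s ∧ 4 * n * q₀ ≤ q + 2 * q₀ ∧ 4 * n * s₀ ≤ s + 2 * s₀ ∧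
    20 * n * q ^ 2 ≤ 5 * s ^ 2 + 7 * q ^ 2 ∧ 5 * s ^ 2 + 7 * q ^ 2 < 25 * n * q ^ 2

/-- The requirements of `Admissible` at step `n`. -/
def Ok (n q₀ q s₀ s b c : ℕ) : Prop :=
  4 * n + 2 ≤ b ∧ b < c ∧ c < 5 * n + 5 ∧
    (1 ≤ n → (q * (b * q + q₀) + s * (c * s + s₀)) * (s + s₀) <
      (c * s + s₀) * (q * (b * q + q₀))) ∧
    (b * q + q₀) * ((5 * n + 9) * (b * q + q₀) + q) <
      s * (c * s + s₀) * (5 * n + 10) + q * ((5 * n + 9) * (b * q + q₀) + q)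

lemma choose_step (n q₀ q s₀ s : ℕ) (hn : 14 ≤ n) (h : Inv n q₀ q s₀ s) :
    Ok n q₀ q s₀ s (choose n q s).1 (choose n q s).2 ∧
      Inv (n + 1) q ((choose n q s).1 * q + q₀) s ((choose n q s).2 * s + s₀) := by
  obtain ⟨m, rfl⟩ : ∃ m, n = m + 2 := ⟨n - 2, by omega⟩
  obtain ⟨hq, hs, hq0, hs0, hlo, hhi⟩ := h
  obtain ⟨b, d, hbd, hb1, hb2, hd⟩ : ∃ b d : ℕ, choose (m + 2) q s = (b, b + d) ∧
      b * (5 * q ^ 2) ≤ 17 * q ^ 2 + 5 * s ^ 2 ∧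
      17 * q ^ 2 + 5 * s ^ 2 < (b + 1) * (5 * q ^ 2) ∧
      (d = 3 ∧ 2 * s ^ 2 < 9 * (m + 2) * q ^ 2 ∨ d = 2 ∧ 9 * (m + 2) * q ^ 2 ≤ 2 * s ^ 2) := by
    refine ⟨_, _, rfl, Nat.div_mul_le_self _ _, by
      rw [mul_comm (_ + 1)]
      exact Nat.lt_mul_div_succ _ (show 0 < 5 * q ^ 2 by positivity), ?_⟩
    split_ifs with h
    · exact Or.inl ⟨rfl, h⟩
    · exact Or.inr ⟨rfl, not_lt.1 h⟩
  rw [hbd]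
  dsimp only
  generalize m + 2 = n at *
  have hq' : (0 : ℝ) < q := by exact_mod_cast hq
  have hs' : (0 : ℝ) < s := by exact_mod_cast hs
  have hn' : (14 : ℝ) ≤ n := by exact_mod_cast hn
  obtain ⟨R, hR⟩ : ∃ R : ℝ, (s : ℝ) ^ 2 = R * q ^ 2 := ⟨s ^ 2 / q ^ 2, by field_simp⟩
  obtain ⟨θ, hθ⟩ : ∃ θ : ℝ, (q₀ : ℝ) = θ * q := ⟨q₀ / q, by field_simp⟩
  obtain ⟨σ, hσ⟩ : ∃ σ : ℝ, (s₀ : ℝ) = σ * s := ⟨s₀ / s, by field_simp⟩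
  have hqq : (0 : ℝ) < (q : ℝ) ^ 2 := by positivity
  have hθ0 : 0 ≤ θ := nonneg_of_mul_nonneg_left (by rw [← hθ]; positivity) hq'
  have hσ0 : 0 ≤ σ := nonneg_of_mul_nonneg_left (by rw [← hσ]; positivity) hs'
  have hθ1 : θ * (4 * n - 2) ≤ 1 := by
    have : (4 * n * q₀ : ℝ) ≤ q + 2 * q₀ := by exact_mod_cast hq0
    rw [hθ] at this
    refine le_of_mul_le_mul_right ?_ hq'
    linarith
  have hσ1 : σ * (4 * n - 2) ≤ 1 := by
    have : (4 * n * s₀ : ℝ) ≤ s + 2 * s₀ := by exact_mod_cast hs0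
    rw [hσ] at this
    refine le_of_mul_le_mul_right ?_ hs'
    linarith
  have hRlo : 4 * (n : ℝ) - 7 / 5 ≤ R := by
    have : (20 * n * q ^ 2 : ℝ) ≤ 5 * s ^ 2 + 7 * q ^ 2 := by exact_mod_cast hlo
    rw [hR] at this
    refine le_of_mul_le_mul_right ?_ hqq
    linarith
  have hRhi : R < 5 * (n : ℝ) - 7 / 5 := by
    have : (5 * s ^ 2 + 7 * q ^ 2 : ℝ) < 25 * n * q ^ 2 := by exact_mod_cast hhi
    rw [hR] at this
    refine lt_of_mul_lt_mul_right ?_ hqq.le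
    linarith
  have hbR : (b : ℝ) ≤ R + 17 / 5 := by
    have : (b * (5 * q ^ 2) : ℝ) ≤ 17 * q ^ 2 + 5 * s ^ 2 := by exact_mod_cast hb1
    rw [hR] at this
    refine le_of_mul_le_mul_right ?_ hqq
    linarith
  have hbR' : R + 17 / 5 < (b : ℝ) + 1 := by
    have : (17 * q ^ 2 + 5 * s ^ 2 : ℝ) < (b + 1) * (5 * q ^ 2) := by exact_mod_cast hb2
    rw [hR] at this
    refine lt_of_mul_lt_mul_right ?_ hqq.le
    linarith
  have hd' : ((d : ℝ) = 3 ∧ R < 9 / 2 * n) ∨ ((d : ℝ) = 2 ∧ 9 / 2 * n ≤ R) := by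
    rcases hd with ⟨rfl, h⟩ | ⟨rfl, h⟩
    · left
      have : (2 * s ^ 2 : ℝ) < 9 * n * q ^ 2 := by exact_mod_cast h
      rw [hR] at this
      exact ⟨by norm_num, lt_of_mul_lt_mul_right (by linarith) hqq.le⟩
    · right
      have : (9 * n * q ^ 2 : ℝ) ≤ 2 * s ^ 2 := by exact_mod_cast h
      rw [hR] at this
      exact ⟨by norm_num, le_of_mul_le_mul_right (by linarith) hqq⟩
  have hblo : 4 * n + 2 ≤ b := by
    have : (4 * n + 1 : ℝ) < b := by linarith
    exact_mod_cast this
  have hbhi : b ≤ 5 * n + 1 := by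
    have : (b : ℝ) < 5 * n + 2 := by linarith
    have : b < 5 * n + 2 := by exact_mod_cast this
    omega
  have hblo' : 4 * (n : ℝ) + 2 ≤ b := by exact_mod_cast hblo
  have hbhi' : (b : ℝ) ≤ 5 * n + 1 := by exact_mod_cast hbhi
  obtain ⟨h1, h2, h3, h4⟩ := step_estimates n R σ θ b d hn' hσ0 hσ1 hθ0 hθ1 hbR hbR' hRlo hblo'
    hbhi' hd' hRhi
  have hd2 : 2 ≤ d ∧ d ≤ 3 := by omega
  have hQ1 : (b * q + q₀ : ℝ) = q * (b + θ) := by rw [hθ]; ring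
  have hS1 : ((b + d : ℝ) * s + s₀) = s * (b + d + σ) := by rw [hσ]; ring
  refine ⟨⟨hblo, by omega, by omega, fun _ => ?_, ?_⟩,
    Nat.add_pos_left (Nat.mul_pos (by omega) hq) _, ?_, ?_, ?_, ?_, ?_⟩
  · have : ((q * (b * q + q₀) + s * ((b + d) * s + s₀)) * (s + s₀) : ℝ) <
        ((b + d) * s + s₀) * (q * (b * q + q₀)) := by
      rw [hQ1, hS1, hσ]
      have := mul_lt_mul_of_pos_left h1 (mul_pos hs' hqq)
      calc (q * (q * (b + θ)) + s * (s * (b + d + σ))) * (s + σ * s)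
          = s * (q ^ 2 * (b + θ) + s ^ 2 * (b + d + σ)) * (1 + σ) := by ring
        _ = s * q ^ 2 * ((R * (b + d + σ) + (b + θ)) * (1 + σ)) := by rw [hR]; ring
        _ < _ := this
        _ = _ := by ring
    exact_mod_cast this
  · have : ((b * q + q₀) * ((5 * n + 9) * (b * q + q₀) + q) : ℝ) <
        s * ((b + d) * s + s₀) * (5 * n + 10) + q * ((5 * n + 9) * (b * q + q₀) + q) := by
      rw [hQ1, hS1]
      have h5 := mul_lt_mul_of_pos_left h2 hqq
      have h6 : (s * (s * (b + d + σ)) * (5 * n + 10) : ℝ) =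
          q ^ 2 * (R * (b + d + σ) * (5 * n + 10)) := by
        calc (s * (s * (b + d + σ)) * (5 * n + 10) : ℝ)
            = s ^ 2 * (b + d + σ) * (5 * n + 10) := by ring
          _ = _ := by rw [hR]; ring
      rw [h6]
      nlinarith [h5]
    exact_mod_cast this
  · exact Nat.add_pos_left (Nat.mul_pos (by omega) hs) _
  · have := Nat.mul_le_mul_right q hblo
    nlinarith
  · have := Nat.mul_le_mul_right s (show 4 * n + 2 ≤ b + d by omega)
    nlinarith
  · have : (20 * (n + 1) * (b * q + q₀) ^ 2 : ℝ) ≤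
        5 * ((b + d) * s + s₀) ^ 2 + 7 * (b * q + q₀) ^ 2 := by
      rw [hQ1, hS1, mul_pow, mul_pow, hR]
      have := mul_le_mul_of_nonneg_left h3 hqq.le
      linarith
    exact_mod_cast this
  · have : (5 * ((b + d) * s + s₀) ^ 2 + 7 * (b * q + q₀) ^ 2 : ℝ) <
        25 * (n + 1) * (b * q + q₀) ^ 2 := by
      rw [hQ1, hS1, mul_pow, mul_pow, hR]
      have := mul_lt_mul_of_pos_left h4 hqq
      linarith
    exact_mod_cast this

lemma inv_state (n : ℕ) (hn : 14 ≤ n) :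
    Inv n (state n).1 (state n).2.1 (state n).2.2.1 (state n).2.2.2 := by
  induction n, hn using Nat.le_induction with
  | base => unfold Inv; decide
  | succ n hn ih => exact (choose_step _ _ _ _ _ hn ih).2

lemma ok_state (n : ℕ) :
    Ok n (state n).1 (state n).2.1 (state n).2.2.1 (state n).2.2.2 (dig n).1 (dig n).2 := by
  rcases lt_or_ge n 14 with h | h
  · have : ∀ n < 14, Ok n (state n).1 (state n).2.1 (state n).2.2.1 (state n).2.2.2
        (dig n).1 (dig n).2 := by unfold Ok; decide
    exact this n h
  · exact (choose_step _ _ _ _ _ h (inv_state n h)).1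

theorem admissible_dig : Admissible (fun n => (dig n).1) (fun n => (dig n).2) := by
  refine ⟨fun n => (ok_state n).1, fun n => (ok_state n).2.1, fun n => (ok_state n).2.2.1,
    fun n => ?_, fun n => ?_⟩
  · have := (ok_state (n + 1)).2.2.2.1 (by omega)
    rw [state_eq] at this
    exact this
  · have := (ok_state n).2.2.2.2
    rw [state_eq] at this
    exact this

/-- there exists an irrational `α ∈ [0,1]` whose Shulga algorithm takes
infinitely many steps and whose Shulga sequences satisfy
`4n − 2 ≤ bₙ < cₙ < 5n` for all `n ≥ 1`. -/
theorem stmt9 : ∃ α : ℝ, α ∈ Set.Icc (0 : ℝ) 1 ∧ Irrational α ∧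
    (∀ n : ℕ, shulgaDefined α n) ∧
    ∀ n : ℕ, 1 ≤ n →
      4 * n - 2 ≤ shulgaB α n ∧ shulgaB α n < shulgaC α n ∧ shulgaC α n < 5 * n := by
  exact stmt9_of_admissible admissible_dig

end ShulgaPaper
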